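/- The family {X ∈ 𝒳_2 : X ⊄ 1+8ℕ₀} coincides with the set of minimal elements of the poset 𝒳_2 (ordered by reverse inclusion), and the complementary set {X ∈ 𝒳_2 : X ⊆ 1+8ℕ₀} is linearly ordered by inclusion and coincides with the family {1+2^nℕ₀ : n ≥ 3}. -/

import Mathlib

/-!
A positive odd `y` lies in the 2-adic closure of `a^ℕ` iff it is congruent to a positive power
of `a` modulo every `2^n` (`mem_clPow_iff`). The engine is `exists_pow_approx`: if
`a = 1 + 2^m s` with `s` odd and `m ≥ 2`, then `a^(2^j) = 1 + 2^(m+j) s'` with `s'` odd, so the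
powers of `a` approximate every `y ≡ 1 (mod 2^m)`, the exponent being corrected one binary digit
at a time. Hence:

* if `a = 1 + 2^m s` with `s` odd and `m ≥ 2`, the closure is `1 + 2^m ℕ₀`;
* if `a = -1 + 2^m s` with `s` odd and `m ≥ 2`, then `a² = 1 + 2^(m+1) s'` with `s'` odd, and the
  closure is the set `negClass m` of numbers congruent to `1` or `2^m - 1` modulo `2^(m+1)`.

So `𝒳_2` consists of the sets `1 + 2^m ℕ₀` and `negClass m` with `m ≥ 2`. The sets contained in
`1 + 8ℕ₀` are the `1 + 2^m ℕ₀` with `m ≥ 3`, which form a chain strictly below `1 + 4ℕ₀` in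
inclusion. The remaining sets `1 + 4ℕ₀` and `negClass m` are maximal for inclusion, as the
elements `5` and `2^m - 1` show.
-/

open TopologicalSpace

/-- The arithmetic progression `a + bℕ₀ = {a + b*n : n ≥ 0}` inside the positive integers. -/
def golombBasic (a b : ℕ) : Set ℕ+ := {x : ℕ+ | ∃ n : ℕ, (x : ℕ) = a + b * n}

/-- The Golomb topology on the positive integers, generated by the arithmetic
progressions `a + bℕ₀` with coprime `a, b ∈ ℕ`. -/
instance golombTopology : TopologicalSpace ℕ+ :=
  generateFrom {S : Set ℕ+ | ∃ a b : ℕ, 0 < a ∧ 0 < b ∧ Nat.Coprime a b ∧ S = golombBasic a b}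

/-- The positive integers not divisible by `p` (the set `ℕ \ pℕ`). -/
abbrev Np (p : ℕ) : Type := {x : ℕ+ // ¬ p ∣ (x : ℕ)}

/-- The `p`-adic topology on `ℕ \ pℕ`, generated by the traces of the sets
`x + p^nℕ₀`, `x, n ∈ ℕ`. -/
def padicTop (p : ℕ) : TopologicalSpace (Np p) :=
  generateFrom {S : Set (Np p) | ∃ x n : ℕ, 0 < x ∧ 0 < n ∧
    S = {y : Np p | ∃ k : ℕ, ((y : ℕ+) : ℕ) = x + p ^ n * k}}

/-- Closure of a set of positive integers in the `p`-adic topology on `ℕ \ pℕ`,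
viewed again as a set of positive integers. -/
def padicClosure (p : ℕ) (A : Set ℕ+) : Set ℕ+ :=
  Subtype.val '' (@closure (Np p) (padicTop p) (Subtype.val ⁻¹' A))

/-- `a^ℕ = {a^k : k ∈ ℕ}`, the set of positive powers of `a`. -/
def powSet (a : ℕ) : Set ℕ+ := {y : ℕ+ | ∃ k : ℕ, 0 < k ∧ (y : ℕ) = a ^ k}

/-- The closure of `a^ℕ` in the `p`-adic topology on `ℕ \ pℕ`. -/
def clPow (p a : ℕ) : Set ℕ+ := padicClosure p (powSet a)

/-- The family `𝒳_p` of closures of the sets `a^ℕ` for `a ∈ ℕ \ pℕ`, `a ≠ 1`. -/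
def XX (p : ℕ) : Set (Set ℕ+) := {X | ∃ a : ℕ, 0 < a ∧ a ≠ 1 ∧ ¬ p ∣ a ∧ X = clPow p a}

/-- The projection `π_n(X)` of a set of positive integers to `ℤ/p^nℤ`. -/
def pin (p n : ℕ) (X : Set ℕ+) : Set (ZMod (p ^ n)) :=
  (fun y : ℕ+ => ((y : ℕ) : ZMod (p ^ n))) '' X

/-- `n(X)`: the least `n ∈ ℕ` with `X = ℕ ∩ π_n⁻¹(π_n(X))` and `|π_n(X)| ≥ max(p,3)`. -/
noncomputable def nX (p : ℕ) (X : Set ℕ+) : ℕ :=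
  sInf {n : ℕ | 0 < n ∧ X = {y : ℕ+ | ((y : ℕ) : ZMod (p ^ n)) ∈ pin p n X} ∧
    max p 3 ≤ (pin p n X).ncard}

/-- `i(X)`: the index of the subgroup `π_{n(X)}(X)` in the group of units of `ℤ/p^{n(X)}ℤ`. -/
noncomputable def iX (p : ℕ) (X : Set ℕ+) : ℕ :=
  Nat.card ((ZMod (p ^ nX p X))ˣ) / (pin p (nX p X) X).ncard

/-- The positive integers congruent to `1` or `2^m - 1` modulo `2^(m+1)`: the closure of `a^ℕ`
when `2^m` is the exact power of `2` dividing `a + 1`. -/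
def negClass (m : ℕ) : Set ℕ+ :=
  {y | (2 : ℤ) ^ (m + 1) ∣ ((y : ℕ) : ℤ) - 1 ∨ (2 : ℤ) ^ (m + 1) ∣ ((y : ℕ) : ℤ) + 1 - 2 ^ m}

/-! ### Closure in the 2-adic topology -/

/-- Every open neighbourhood of `y` in the `2`-adic topology contains some `y + 2^n ℕ₀`. -/
lemma exists_progression_subset {o : Set (Np 2)} (ho : @IsOpen _ (padicTop 2) o) (y : Np 2)
    (hy : y ∈ o) :
    ∃ n : ℕ, ∀ z : Np 2, ∀ k : ℕ, ((z : ℕ+) : ℕ) = ((y : ℕ+) : ℕ) + 2 ^ n * k → z ∈ o := by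
  have ho' : GenerateOpen {S : Set (Np 2) | ∃ x n : ℕ, 0 < x ∧ 0 < n ∧
    S = {y : Np 2 | ∃ k : ℕ, ((y : ℕ+) : ℕ) = x + 2 ^ n * k}} o := ho
  clear ho
  induction ho' with
  | basic s hs =>
    obtain ⟨x, n, -, -, rfl⟩ := hs
    obtain ⟨j, hj⟩ := hy
    exact ⟨n, fun z k hz => ⟨j + k, by rw [hz, hj]; ring⟩⟩
  | univ => exact ⟨0, fun _ _ _ => trivial⟩
  | inter s t _ _ ihs iht =>
    obtain ⟨n, hn⟩ := ihs hy.1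
    obtain ⟨m, hm⟩ := iht hy.2
    refine ⟨n + m, fun z k hz => ⟨hn z (2 ^ m * k) ?_, hm z (2 ^ n * k) ?_⟩⟩ <;> rw [hz] <;> ring
  | sUnion S _ ih =>
    obtain ⟨t, ht, hyt⟩ := hy
    obtain ⟨n, hn⟩ := ih t ht hyt
    exact ⟨n, fun z k hz => ⟨t, ht, hn z k hz⟩⟩

lemma odd_pow_sub_one_dvd {a : ℤ} (ha : Odd a) (n : ℕ) : (2 : ℤ) ^ n ∣ a ^ (2 ^ n) - 1 := by
  induction n with
  | zero => simp
  | succ n ih =>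
    have h2 : (2 : ℤ) ∣ a ^ 2 ^ n + 1 := (ha.pow.add_odd odd_one).two_dvd
    have : a ^ 2 ^ (n + 1) - 1 = (a ^ 2 ^ n - 1) * (a ^ 2 ^ n + 1) := by ring
    rw [this, pow_succ]
    exact mul_dvd_mul ih h2

lemma mem_clPow_iff {a : ℕ} (ha1 : a ≠ 1) (ha : Odd a) (y : ℕ+) :
    y ∈ clPow 2 a ↔ Odd (y : ℕ) ∧
      ∀ n : ℕ, ∃ k : ℕ, 0 < k ∧ (2 : ℤ) ^ n ∣ (a : ℤ) ^ k - ((y : ℕ) : ℤ) := by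
  let _ := padicTop 2
  unfold clPow padicClosure
  constructor
  · rintro ⟨⟨y, hy⟩, hcl, rfl⟩
    refine ⟨by rw [← Nat.not_even_iff_odd, even_iff_two_dvd]; exact hy, fun n => ?_⟩
    have hopen : IsOpen {z : Np 2 | ∃ k : ℕ, ((z : ℕ+) : ℕ) = (y : ℕ) + 2 ^ (n + 1) * k} :=
      isOpen_generateFrom_of_mem ⟨y, n + 1, y.pos, n.succ_pos, rfl⟩
    obtain ⟨z, ⟨j, hj⟩, k, hk, hz⟩ := mem_closure_iff.1 hcl _ hopen ⟨0, by simp⟩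
    refine ⟨k, hk, 2 * j, ?_⟩
    have : (a : ℤ) ^ k = (y : ℕ) + 2 ^ (n + 1) * j := by exact_mod_cast hz.symm.trans hj
    simp only [this]
    ring
  · rintro ⟨hy, h⟩
    have hy2 : ¬ 2 ∣ (y : ℕ) := by rw [← even_iff_two_dvd, Nat.not_even_iff_odd]; exact hy
    refine ⟨⟨y, hy2⟩, mem_closure_iff.2 fun o ho hyo => ?_, rfl⟩
    obtain ⟨n, hn⟩ := exists_progression_subset ho _ hyo
    obtain ⟨k, hk, hd⟩ := h n
    have ha2 : 1 < a := by have := ha.pos; omega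
    -- Adding `2^n * y` to the exponent keeps the residue and makes the power exceed `y`.
    set K := k + 2 ^ n * (y : ℕ) with hK
    have hle : (y : ℕ) ≤ a ^ K := by
      have h1 : (y : ℕ) ≤ K := by
        have := Nat.le_mul_of_pos_left (y : ℕ) (Nat.two_pow_pos n); omega
      exact h1.trans (Nat.lt_pow_self ha2).le
    have hd' : (2 : ℤ) ^ n ∣ (a : ℤ) ^ K - ((y : ℕ) : ℤ) := by
      have h1 : (2 : ℤ) ^ n ∣ (a : ℤ) ^ (2 ^ n * (y : ℕ)) - 1 := by
        rw [pow_mul]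
        refine (odd_pow_sub_one_dvd (a := (a : ℤ)) (by exact_mod_cast ha) n).trans ?_
        simpa using sub_dvd_pow_sub_pow ((a : ℤ) ^ 2 ^ n) 1 (y : ℕ)
      have : (a : ℤ) ^ K - ((y : ℕ) : ℤ) =
          (a : ℤ) ^ k * ((a : ℤ) ^ (2 ^ n * (y : ℕ)) - 1) + ((a : ℤ) ^ k - ((y : ℕ) : ℤ)) := by
        rw [hK, pow_add]; ring
      rw [this]
      exact dvd_add (h1.mul_left _) hd
    have hdn : 2 ^ n ∣ a ^ K - (y : ℕ) := by
      zify [hle]; exact hd'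
    obtain ⟨j, hj⟩ := hdn
    have hodd : Odd (a ^ K) := ha.pow
    refine ⟨⟨⟨a ^ K, hodd.pos⟩, ?_⟩, hn _ j ?_, K, by omega, rfl⟩
    · rw [← even_iff_two_dvd, Nat.not_even_iff_odd]; exact hodd
    · change a ^ K = (y : ℕ) + _
      omega

/-! ### Powers of an odd number modulo powers of 2 -/

lemma pow_two_pow_eq {a s : ℤ} {m : ℕ} (hm : 2 ≤ m) (hs : Odd s) (ha : a = 1 + 2 ^ m * s)
    (j : ℕ) : ∃ t : ℤ, Odd t ∧ a ^ 2 ^ j = 1 + 2 ^ (m + j) * t := by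
  induction j with
  | zero => exact ⟨s, hs, by simpa using ha⟩
  | succ j ih =>
    obtain ⟨t, ht, h⟩ := ih
    obtain ⟨c, rfl⟩ : ∃ c, m = c + 2 := ⟨m - 2, by omega⟩
    -- `(1 + 2^M t)² = 1 + 2^(M+1) (t + 2^(M-1) t²)`
    refine ⟨t + 2 * (2 ^ (c + j) * t ^ 2), ht.add_even (even_two_mul _), ?_⟩
    rw [pow_succ 2 j, pow_mul, h]
    ring

/-- The powers of `a = 1 + 2^m s`, `s` odd, are 2-adically dense in `1 + 2^m ℤ`. The integer `y`
is arbitrary, as the case `a ≡ 3 (mod 4)` applies this to `a²` and to a product `a * y`. -/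
lemma exists_pow_approx {a s y : ℤ} {m : ℕ} (hm : 2 ≤ m) (hs : Odd s) (ha : a = 1 + 2 ^ m * s)
    (hy : (2 : ℤ) ^ m ∣ y - 1) (n : ℕ) : ∃ k : ℕ, 0 < k ∧ (2 : ℤ) ^ n ∣ a ^ k - y := by
  have hao : Odd a := by
    rw [ha, add_comm]
    exact Even.add_one ((even_two.pow_of_ne_zero (by omega)).mul_right _)
  suffices h : ∀ j : ℕ, ∃ k : ℕ, 0 < k ∧ (2 : ℤ) ^ (m + j) ∣ a ^ k - y by
    obtain ⟨k, hk, h⟩ := h n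
    exact ⟨k, hk, (pow_dvd_pow 2 (by omega)).trans h⟩
  intro j
  induction j with
  | zero =>
    refine ⟨1, one_pos, ?_⟩
    have : a ^ 1 - y = 2 ^ m * s - (y - 1) := by rw [ha]; ring
    rw [this]
    exact dvd_sub (dvd_mul_right _ _) hy
  | succ j ih =>
    obtain ⟨k, hk, t, ht⟩ := ih
    rcases Int.even_or_odd t with he | ho
    · refine ⟨k, hk, ?_⟩
      rw [ht, ← add_assoc, pow_succ]
      exact mul_dvd_mul_left _ he.two_dvd
    · obtain ⟨r, hr, h⟩ := pow_two_pow_eq hm hs ha j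
      refine ⟨k + 2 ^ j, Nat.add_pos_left hk _, ?_⟩
      have : a ^ (k + 2 ^ j) - y = 2 ^ (m + j) * (t + r * a ^ k) := by
        rw [pow_add, h]
        linear_combination ht
      rw [this, ← add_assoc, pow_succ]
      exact mul_dvd_mul_left _ (ho.add_odd (hr.mul hao.pow)).two_dvd

/-! ### The closures of the sets of powers -/

lemma mem_golombBasic_one_iff (m : ℕ) (y : ℕ+) :
    y ∈ golombBasic 1 (2 ^ m) ↔ (2 : ℤ) ^ m ∣ ((y : ℕ) : ℤ) - 1 := by
  have hy := y.pos
  constructor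
  · rintro ⟨n, hn⟩
    exact ⟨n, by rw [hn]; push_cast; ring⟩
  · intro h
    have : 2 ^ m ∣ (y : ℕ) - 1 := by
      zify [Nat.one_le_iff_ne_zero.2 hy.ne']; exact h
    obtain ⟨n, hn⟩ := this
    exact ⟨n, by omega⟩

lemma clPow_pos_case {a m : ℕ} {s : ℤ} (ha1 : a ≠ 1) (hm : 2 ≤ m) (hs : Odd s)
    (ha : (a : ℤ) = 1 + 2 ^ m * s) : clPow 2 a = golombBasic 1 (2 ^ m) := by
  have h2m : (2 : ℤ) ∣ 2 ^ m := dvd_pow_self 2 (by omega)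
  have hao : Odd a := by
    have : (2 : ℤ) ∣ 2 ^ m * s := h2m.mul_right _
    rw [Nat.odd_iff]; omega
  ext y
  rw [mem_clPow_iff ha1 hao, mem_golombBasic_one_iff]
  constructor
  · rintro ⟨-, h⟩
    obtain ⟨k, -, hk⟩ := h m
    have h1 : (2 : ℤ) ^ m ∣ (a : ℤ) ^ k - 1 := by
      have h2 : (2 : ℤ) ^ m ∣ (a : ℤ) - 1 := ⟨s, by rw [ha]; ring⟩
      exact h2.trans (by simpa using sub_dvd_pow_sub_pow (a : ℤ) 1 k)
    simpa using dvd_sub h1 hk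
  · intro h
    refine ⟨?_, exists_pow_approx hm hs ha h⟩
    have := h2m.trans h
    rw [Nat.odd_iff]; omega

lemma clPow_neg_case {a m : ℕ} {s : ℤ} (hm : 2 ≤ m) (hs : Odd s)
    (ha : (a : ℤ) = -1 + 2 ^ m * s) : clPow 2 a = negClass m := by
  have h4m : (4 : ℤ) ∣ 2 ^ m := by simpa using pow_dvd_pow (2 : ℤ) hm
  have h4 : (4 : ℤ) ∣ 2 ^ m * s := h4m.mul_right _
  have hao : Odd a := by rw [Nat.odd_iff]; omega
  have hao' : Odd (a : ℤ) := by exact_mod_cast hao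
  have ha1 : a ≠ 1 := by omega
  -- `a² = 1 + 2^(m+1) (-s + 2^(m-1) s²)`
  obtain ⟨r, hr, hsq⟩ : ∃ r : ℤ, Odd r ∧ (a : ℤ) ^ 2 = 1 + 2 ^ (m + 1) * r := by
    obtain ⟨c, rfl⟩ : ∃ c, m = c + 2 := ⟨m - 2, by omega⟩
    exact ⟨-s + 2 * (2 ^ c * s ^ 2), hs.neg.add_even (even_two_mul _), by rw [ha]; ring⟩
  have haneg : (2 : ℤ) ^ (m + 1) ∣ (a : ℤ) + 1 - 2 ^ m := by
    obtain ⟨c, hc⟩ := hs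
    exact ⟨c, by rw [ha, hc]; ring⟩
  have hsq1 : ∀ i : ℕ, (2 : ℤ) ^ (m + 1) ∣ ((a : ℤ) ^ 2) ^ i - 1 := fun i =>
    Dvd.dvd.trans (b := (a : ℤ) ^ 2 - 1) ⟨r, by rw [hsq]; ring⟩ (by simpa using sub_dvd_pow_sub_pow ((a : ℤ) ^ 2) 1 i)
  ext y
  rw [mem_clPow_iff ha1 hao]
  constructor
  · rintro ⟨-, h⟩
    obtain ⟨k, -, hk⟩ := h (m + 1)
    rcases Nat.even_or_odd' k with ⟨i, rfl | rfl⟩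
    · left
      rw [pow_mul] at hk
      simpa using dvd_sub (hsq1 i) hk
    · right
      have : ((y : ℕ) : ℤ) + 1 - 2 ^ m = ((a : ℤ) + 1 - 2 ^ m) + a * (((a : ℤ) ^ 2) ^ i - 1)
          - ((a : ℤ) ^ (2 * i + 1) - ((y : ℕ) : ℤ)) := by ring
      rw [this]
      exact dvd_sub (dvd_add haneg ((hsq1 i).mul_left _)) hk
  · intro h
    have h2m1 : (2 : ℤ) ∣ 2 ^ (m + 1) := dvd_pow_self 2 (by omega)
    refine ⟨?_, fun n => ?_⟩
    · rw [Nat.odd_iff]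
      rcases h with h | h
      · have := h2m1.trans h; omega
      · have := h2m1.trans h; omega
    · rcases h with h | h
      · obtain ⟨k, hk, hd⟩ := exists_pow_approx (by omega) hr hsq h n
        exact ⟨2 * k, by omega, by rwa [pow_mul]⟩
      · -- Here `y ≡ a`, so `a * y ≡ 1`; approximate `a * y` by `a^(2k)` and cancel `a`.
        have hay : (2 : ℤ) ^ (m + 1) ∣ (a : ℤ) * ((y : ℕ) : ℤ) - 1 := by
          have : (a : ℤ) * ((y : ℕ) : ℤ) - 1 = a * ((((y : ℕ) : ℤ) + 1 - 2 ^ m)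
            - ((a : ℤ) + 1 - 2 ^ m)) + (((a : ℤ) ^ 2) ^ 1 - 1) := by ring
          rw [this]
          exact dvd_add ((dvd_sub h haneg).mul_left _) (hsq1 1)
        obtain ⟨k, hk, hd⟩ := exists_pow_approx (by omega) hr hsq hay n
        refine ⟨2 * (k - 1) + 1, by omega, ?_⟩
        have hcop : IsCoprime ((2 : ℤ) ^ n) (a : ℤ) :=
          (Int.isCoprime_two_left.2 hao').pow_left
        refine hcop.dvd_of_dvd_mul_left ?_
        obtain ⟨c, rfl⟩ : ∃ c, k = c + 1 := ⟨k - 1, by omega⟩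
        rw [Nat.add_sub_cancel]
        have : (a : ℤ) * ((a : ℤ) ^ (2 * c + 1) - ((y : ℕ) : ℤ)) =
            ((a : ℤ) ^ 2) ^ (c + 1) - (a : ℤ) * ((y : ℕ) : ℤ) := by ring
        rwa [this]

lemma exists_eq_two_pow_mul {x : ℤ} (hx : x ≠ 0) (h4 : (4 : ℤ) ∣ x) :
    ∃ (m : ℕ) (s : ℤ), 2 ≤ m ∧ Odd s ∧ x = 2 ^ m * s := by
  have hf : FiniteMultiplicity (2 : ℤ) x := Int.finiteMultiplicity_iff.2 ⟨by decide, hx⟩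
  obtain ⟨s, hs, h2⟩ := hf.exists_eq_pow_mul_and_not_dvd
  refine ⟨_, s, ?_, ?_, hs⟩
  · exact hf.le_multiplicity_of_pow_dvd (by simpa using h4)
  · rw [← Int.not_even_iff_odd, even_iff_two_dvd]; exact h2

lemma XX_two_cases {X : Set ℕ+} (hX : X ∈ XX 2) :
    ∃ m : ℕ, 2 ≤ m ∧ (X = golombBasic 1 (2 ^ m) ∨ X = negClass m) := by
  obtain ⟨a, ha0, ha1, ha2, rfl⟩ := hX
  have h : a % 4 = 1 ∨ a % 4 = 3 := by omega
  rcases h with h | h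
  · obtain ⟨m, s, hm, hs, hx⟩ := exists_eq_two_pow_mul (x := (a : ℤ) - 1) (by omega) (by omega)
    exact ⟨m, hm, Or.inl (clPow_pos_case ha1 hm hs (by linarith))⟩
  · obtain ⟨m, s, hm, hs, hx⟩ := exists_eq_two_pow_mul (x := (a : ℤ) + 1) (by omega) (by omega)
    exact ⟨m, hm, Or.inr (clPow_neg_case hm hs (by linarith))⟩

lemma golombBasic_mem_XX {m : ℕ} (hm : 2 ≤ m) : golombBasic 1 (2 ^ m) ∈ XX 2 := by
  have h2 : 2 ∣ 2 ^ m := dvd_pow_self 2 (by omega)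
  have hp : 0 < 2 ^ m := Nat.two_pow_pos m
  refine ⟨1 + 2 ^ m, by omega, by omega, by omega, ?_⟩
  exact (clPow_pos_case (s := 1) (by omega) hm odd_one (by push_cast; ring)).symm

/-! ### Inclusions between the closures -/

lemma golombBasic_anti {m n : ℕ} (h : m ≤ n) :
    golombBasic 1 (2 ^ n) ⊆ golombBasic 1 (2 ^ m) := fun y hy => by
  rw [mem_golombBasic_one_iff] at *
  exact (pow_dvd_pow 2 h).trans hy

lemma five_mem_golombBasic_iff {m : ℕ} : (5 : ℕ+) ∈ golombBasic 1 (2 ^ m) ↔ m ≤ 2 := by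
  rw [mem_golombBasic_one_iff]
  have : (((5 : ℕ+) : ℕ) : ℤ) - 1 = 2 ^ 2 := by norm_num
  rw [this]
  constructor
  · intro h
    by_contra! hm
    exact absurd ((pow_dvd_pow (2 : ℤ) hm).trans h) (by norm_num)
  · exact pow_dvd_pow 2

lemma five_notMem_negClass {m : ℕ} (hm : 2 ≤ m) : (5 : ℕ+) ∉ negClass m := by
  have h8 : (8 : ℤ) ∣ 2 ^ (m + 1) := by
    simpa using pow_dvd_pow (2 : ℤ) (show 3 ≤ m + 1 by omega)
  have h4 : (4 : ℤ) ∣ 2 ^ m := by simpa using pow_dvd_pow (2 : ℤ) hm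
  have h5 : (((5 : ℕ+) : ℕ) : ℤ) = 5 := rfl
  rintro (h | h)
  · have := h8.trans h; omega
  · have := h8.trans h; omega

/-- The element `2^m - 1` of `negClass m`; it lies in no other member of `𝒳_2`
(`witness_notMem_golombBasic`, `eq_of_witness_mem_negClass`). -/
lemma exists_negClass_witness {m : ℕ} (hm : 2 ≤ m) :
    ∃ w : ℕ+, w ∈ negClass m ∧ ((w : ℕ) : ℤ) + 1 = 2 ^ m := by
  have h1 : 1 < 2 ^ m := Nat.one_lt_two_pow (by omega)
  obtain ⟨w, hw⟩ : ∃ w : ℕ+, (w : ℕ) = 2 ^ m - 1 := ⟨⟨2 ^ m - 1, by omega⟩, rfl⟩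
  have hw' : ((w : ℕ) : ℤ) + 1 = 2 ^ m := by
    rw [hw]; push_cast [h1.le]; ring
  exact ⟨w, Or.inr (by rw [hw']; simp), hw'⟩

lemma witness_notMem_golombBasic {m n : ℕ} (hm : 2 ≤ m) (hn : 2 ≤ n) {w : ℕ+}
    (hw : ((w : ℕ) : ℤ) + 1 = 2 ^ m) : w ∉ golombBasic 1 (2 ^ n) := by
  rw [mem_golombBasic_one_iff]
  intro h
  have h4 : (4 : ℤ) ∣ 2 ^ m := by simpa using pow_dvd_pow (2 : ℤ) hm
  have h4' : (4 : ℤ) ∣ 2 ^ n := by simpa using pow_dvd_pow (2 : ℤ) hn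
  have := h4'.trans h
  omega

lemma eq_of_witness_mem_negClass {m n : ℕ} (hm : 2 ≤ m) (hn : 2 ≤ n) {w : ℕ+}
    (hw : ((w : ℕ) : ℤ) + 1 = 2 ^ m) (h : w ∈ negClass n) : m = n := by
  have h4 : (4 : ℤ) ∣ 2 ^ m := by simpa using pow_dvd_pow (2 : ℤ) hm
  rcases h with h | h
  · have h4' : (4 : ℤ) ∣ 2 ^ (n + 1) := by
      simpa using pow_dvd_pow (2 : ℤ) (show 2 ≤ n + 1 by omega)
    have := h4'.trans h
    omega
  · rw [hw] at h
    -- `2^(n+1) ∣ 2^m - 2^n` determines the exponent.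
    have key : ∀ {i j : ℕ}, i < j → ¬ (2 : ℤ) ^ j ∣ 2 ^ i := fun {i j} hij hd => by
      have := (Nat.pow_dvd_pow_iff_le_right (le_refl 2)).1
        (show 2 ^ j ∣ 2 ^ i by exact_mod_cast hd)
      omega
    rcases lt_trichotomy m n with hlt | heq | hgt
    · exfalso
      have h1 : (2 : ℤ) ^ (m + 1) ∣ 2 ^ n := pow_dvd_pow 2 hlt
      have h2 : (2 : ℤ) ^ (m + 1) ∣ 2 ^ m - 2 ^ n := (pow_dvd_pow 2 (by omega)).trans h
      exact key (Nat.lt_succ_self m) ((dvd_sub_left h1).1 h2)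
    · exact heq
    · exfalso
      have h1 : (2 : ℤ) ^ (n + 1) ∣ 2 ^ m := pow_dvd_pow 2 hgt
      exact key (Nat.lt_succ_self n) ((dvd_sub_right h1).1 h)

lemma XX_two_subset_iff {X : Set ℕ+} :
    X ∈ XX 2 ∧ X ⊆ golombBasic 1 8 ↔ ∃ n : ℕ, 3 ≤ n ∧ X = golombBasic 1 (2 ^ n) := by
  have h8 : golombBasic 1 8 = golombBasic 1 (2 ^ 3) := by norm_num
  rw [h8]
  constructor
  · rintro ⟨hX, hsub⟩
    obtain ⟨m, hm, rfl | rfl⟩ := XX_two_cases hX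
    · refine ⟨m, ?_, rfl⟩
      by_contra! hlt
      have := five_mem_golombBasic_iff.1 (hsub (five_mem_golombBasic_iff.2 (by omega : m ≤ 2)))
      omega
    · obtain ⟨w, hw, hw'⟩ := exists_negClass_witness hm
      exact absurd (hsub hw) (witness_notMem_golombBasic hm (by omega) hw')
  · rintro ⟨n, hn, rfl⟩
    exact ⟨golombBasic_mem_XX (by omega), golombBasic_anti hn⟩

/-- `{X ∈ 𝒳_2 : X ⊄ 1 + 8ℕ₀}` is exactly the set of minimal elements of the poset `𝒳_2`
(ordered by reverse inclusion), while `{X ∈ 𝒳_2 : X ⊆ 1 + 8ℕ₀}` is linearly ordered by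
inclusion and coincides with `{1 + 2^nℕ₀ : n ≥ 3}`. -/
theorem XX_two_minimal_elements :
    ({X : Set ℕ+ | X ∈ XX 2 ∧ ¬ X ⊆ golombBasic 1 8} =
      {X : Set ℕ+ | X ∈ XX 2 ∧ ∀ Y ∈ XX 2, X ⊆ Y → Y = X}) ∧
    (∀ X ∈ XX 2, ∀ Y ∈ XX 2, X ⊆ golombBasic 1 8 → Y ⊆ golombBasic 1 8 →
      X ⊆ Y ∨ Y ⊆ X) ∧
    {X : Set ℕ+ | X ∈ XX 2 ∧ X ⊆ golombBasic 1 8} =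
      {S : Set ℕ+ | ∃ n : ℕ, 3 ≤ n ∧ S = golombBasic 1 (2 ^ n)} := by
  refine ⟨?_, ?_, Set.ext fun X => XX_two_subset_iff⟩
  · ext X
    refine and_congr_right fun hX => ⟨fun hns Y hY hXY => ?_, fun hmin hsub => ?_⟩
    · obtain ⟨m, hm, rfl | rfl⟩ := XX_two_cases hX
      · have hm2 : m = 2 := by
          by_contra hne
          exact hns (XX_two_subset_iff.2 ⟨m, by omega, rfl⟩).2
        subst hm2
        have h5 := hXY (five_mem_golombBasic_iff.2 le_rfl)
        obtain ⟨n, hn, rfl | rfl⟩ := XX_two_cases hY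
        · rw [le_antisymm (five_mem_golombBasic_iff.1 h5) hn]
        · exact absurd h5 (five_notMem_negClass hn)
      · obtain ⟨w, hw, hw'⟩ := exists_negClass_witness hm
        obtain ⟨n, hn, rfl | rfl⟩ := XX_two_cases hY
        · exact absurd (hXY hw) (witness_notMem_golombBasic hm hn hw')
        · rw [eq_of_witness_mem_negClass hm hn hw' (hXY hw)]
    · -- A set inside `1 + 8ℕ₀` is strictly contained in `1 + 4ℕ₀`.
      obtain ⟨n, hn, rfl⟩ := XX_two_subset_iff.1 ⟨hX, hsub⟩
      have heq := hmin _ (golombBasic_mem_XX le_rfl) (golombBasic_anti (by omega))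
      have h5 : (5 : ℕ+) ∈ golombBasic 1 (2 ^ n) := heq ▸ five_mem_golombBasic_iff.2 le_rfl
      have := five_mem_golombBasic_iff.1 h5
      omega
  · intro X hX Y hY hX8 hY8
    obtain ⟨m, -, rfl⟩ := XX_two_subset_iff.1 ⟨hX, hX8⟩
    obtain ⟨n, -, rfl⟩ := XX_two_subset_iff.1 ⟨hY, hY8⟩
    exact (le_total m n).symm.imp golombBasic_anti golombBasic_anti
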